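/- Let e be uniformly distributed on the unit sphere S^{d-1} ⊂ R^d and let h : R^d → R be continuously differentiable. Then for any x ∈ R^d and γ > 0, E[(d/γ) h(x + γe) e] = E[∇h(x + γu)], where u is uniformly distributed on the closed unit ball B^d(1). -/

import Mathlib

open MeasureTheory

/-- The uniform probability distribution on the unit sphere of `ℝ^d`, viewed as a measure on
`ℝ^d` (normalized surface measure). -/
noncomputable def sphereUniform (d : ℕ) : Measure (EuclideanSpace ℝ (Fin d)) :=
  (((volume : Measure (EuclideanSpace ℝ (Fin d))).toSphere) Set.univ)⁻¹ •
    ((volume : Measure (EuclideanSpace ℝ (Fin d))).toSphere).map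
      ((↑) : Metric.sphere (0 : EuclideanSpace ℝ (Fin d)) 1 → EuclideanSpace ℝ (Fin d))

/-- The uniform probability distribution on the closed unit ball of `ℝ^d`. -/
noncomputable def ballUniform (d : ℕ) : Measure (EuclideanSpace ℝ (Fin d)) :=
  ((volume : Measure (EuclideanSpace ℝ (Fin d))) (Metric.ball 0 1))⁻¹ •
    (volume : Measure (EuclideanSpace ℝ (Fin d))).restrict (Metric.ball 0 1)

lemma aux_d1 (a : ℝ → ℝ) (ha : Continuous a) (R : ℝ) :
    HasDerivAt (fun R => ∫ r in (0:ℝ)..R, (R^2 - r^2) * a r) (2 * R * ∫ r in (0:ℝ)..R, a r) R := by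
  have e : (fun R => ∫ r in (0:ℝ)..R, (R^2 - r^2) * a r) =
      fun R => R^2 * (∫ r in (0:ℝ)..R, a r) - ∫ r in (0:ℝ)..R, r^2 * a r := by
    funext R
    rw [← intervalIntegral.integral_const_mul, ← intervalIntegral.integral_sub]
    · simp only [sub_mul]
    · exact (by fun_prop : Continuous fun r => R^2 * a r).intervalIntegrable _ _
    · exact (by fun_prop : Continuous fun r => r^2 * a r).intervalIntegrable _ _
  rw [e]
  have h0 := ha.integral_hasStrictDerivAt 0 R |>.hasDerivAt
  have h2 := (by fun_prop : Continuous fun r => r^2 * a r).integral_hasStrictDerivAt 0 R |>.hasDerivAt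
  have := ((hasDerivAt_pow 2 R).mul h0).sub h2
  refine this.congr_deriv ?_
  simp; 

lemma aux_d2 (a : ℝ → ℝ) (ha : Continuous a) (R : ℝ) :
    HasDerivAt (fun R => ∫ r in (0:ℝ)..R, (R^2 - r^2)^2 * a r)
      (4 * R * ∫ r in (0:ℝ)..R, (R^2 - r^2) * a r) R := by
  have e : (fun R => ∫ r in (0:ℝ)..R, (R^2 - r^2)^2 * a r) =
      fun R => R^2 * (∫ r in (0:ℝ)..R, (R^2 - r^2) * a r) - 
        ∫ r in (0:ℝ)..R, (R^2 - r^2) * (r^2 * a r) := by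
    funext R
    rw [← intervalIntegral.integral_const_mul, ← intervalIntegral.integral_sub]
    · congr 1; ext r; ring
    · exact (by fun_prop : Continuous fun r => R^2 * ((R^2-r^2) * a r)).intervalIntegrable _ _
    · exact (by fun_prop : Continuous fun r => (R^2-r^2) * (r^2 * a r)).intervalIntegrable _ _
  have e2 : (∫ r in (0:ℝ)..R, (R^2 - r^2) * a r) = 
      R^2 * (∫ r in (0:ℝ)..R, a r) - ∫ r in (0:ℝ)..R, r^2 * a r := by
    rw [← intervalIntegral.integral_const_mul, ← intervalIntegral.integral_sub]
    · simp only [sub_mul]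
    · exact (by fun_prop : Continuous fun r => R^2 * a r).intervalIntegrable _ _
    · exact (by fun_prop : Continuous fun r => r^2 * a r).intervalIntegrable _ _
  rw [e]
  have h0 := aux_d1 a ha R
  have h2 := aux_d1 _ (by fun_prop : Continuous fun r => r^2 * a r) R
  have := ((hasDerivAt_pow 2 R).mul h0).sub h2
  refine this.congr_deriv ?_
  rw [e2]; push_cast; ring

lemma aux_1d (a s : ℝ → ℝ) (ha : Continuous a) (hs : Continuous s)
    (H : ∀ R, 0 < R → ∫ r in (0:ℝ)..R, (R^2 - r^2)^2 * a r
      = 4 * ∫ r in (0:ℝ)..R, (R^2 - r^2) * s r) :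
    ∫ r in (0:ℝ)..1, a r = s 1 := by
  have H1 : ∀ R, 0 < R → ∫ r in (0:ℝ)..R, (R^2 - r^2) * a r = 2 * ∫ r in (0:ℝ)..R, s r := by
    intro R hR
    have h1 := aux_d2 a ha R
    have h2 := (aux_d1 s hs R).const_mul 4
    have h3 := h1.congr_of_eventuallyEq (f₁ := fun R => 4 * ∫ r in (0:ℝ)..R, (R^2 - r^2) * s r)
      ((eventually_gt_nhds hR).mono fun y hy => (H y hy).symm)
    have := h3.unique h2
    have h4 : 4 * R ≠ 0 := by positivity
    apply mul_left_cancel₀ h4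
    linarith
  have h1 := aux_d1 a ha 1
  have h2 := ((hs.integral_hasStrictDerivAt 0 1).hasDerivAt).const_mul 2
  have h3 := h1.congr_of_eventuallyEq (f₁ := fun R => 2 * ∫ r in (0:ℝ)..R, s r)
      ((eventually_gt_nhds one_pos).mono fun y hy => (H1 y hy).symm)
  have := h3.unique h2
  linarith

lemma aux_sq (y : ℝ) : HasDerivAt (fun y : ℝ => (max 0 y)^2) (2 * max 0 y) y := by
  rcases lt_trichotomy y 0 with h | h | h
  · have : (fun y : ℝ => (max 0 y)^2) =ᶠ[nhds y] fun _ => 0 :=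
      (eventually_lt_nhds h).mono fun z hz => by simp [max_eq_left hz.le]
    rw [max_eq_left h.le]
    simpa using (hasDerivAt_const y (0:ℝ)).congr_of_eventuallyEq this
  · subst h
    rw [hasDerivAt_iff_isLittleO]
    simp only [max_self, mul_zero, sub_zero, smul_zero, ne_eq, OfNat.ofNat_ne_zero, 
      not_false_eq_true, zero_pow]
    refine Asymptotics.IsBigO.trans_isLittleO (g := fun y : ℝ => y^2) ?_ ?_
    · refine Asymptotics.IsBigO.of_bound 1 (Filter.Eventually.of_forall fun z => ?_)
      simp only [norm_pow, one_mul, Real.norm_eq_abs]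
      refine pow_le_pow_left₀ (abs_nonneg _) ?_ 2
      rw [abs_of_nonneg (le_max_left _ _)]
      exact max_le (abs_nonneg _) (le_abs_self _)
    · exact Asymptotics.isLittleO_pow_id one_lt_two
  · have : (fun y : ℝ => (max 0 y)^2) =ᶠ[nhds y] fun y => y^2 :=
      (eventually_gt_nhds h).mono fun z hz => by simp [max_eq_right hz.le]
    rw [max_eq_right h.le]
    simpa using (hasDerivAt_pow 2 y).congr_of_eventuallyEq this

lemma aux_polar_int {E : Type*} [NormedAddCommGroup E] [InnerProductSpace ℝ E]
    [FiniteDimensional ℝ E] [MeasurableSpace E] [BorelSpace E] [Nontrivial E]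
    (F : E → ℝ) (hF : Integrable F) :
    ∫ u, F u = ∫ r in Set.Ioi (0:ℝ), r ^ (Module.finrank ℝ E - 1) *
      ∫ e : Metric.sphere (0:E) 1, F (r • (e:E)) ∂(volume : Measure E).toSphere := by
  have hmp := (volume : Measure E).measurePreserving_homeomorphUnitSphereProd
  have key : ∀ u : ({0}ᶜ : Set E), F u.1 =
      (fun p : Metric.sphere (0:E) 1 × Set.Ioi (0:ℝ) => F (p.2.1 • (p.1:E)))
        (homeomorphUnitSphereProd E u) := by
    intro u
    have hu : ‖u.1‖ ≠ 0 := norm_ne_zero_iff.2 u.2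
    simp [homeomorphUnitSphereProd, smul_smul, hu]
  have hint : Integrable (fun p : Metric.sphere (0:E) 1 × Set.Ioi (0:ℝ) => F (p.2.1 • (p.1:E)))
      ((volume : Measure E).toSphere.prod (.volumeIoiPow (Module.finrank ℝ E - 1))) := by
    rw [← hmp.integrable_comp_emb (Homeomorph.measurableEmbedding _)]
    have : IntegrableOn F ({0}ᶜ : Set E) := hF.integrableOn
    rw [integrableOn_iff_comap_subtypeVal (by measurability)] at this
    exact this.congr (Filter.Eventually.of_forall key)
  calc
    ∫ u, F u = ∫ x : ({(0)}ᶜ : Set E), F x.1 ∂((volume : Measure E).comap Subtype.val) := by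
      rw [integral_subtype_comap (measurableSet_singleton _).compl F,
        restrict_compl_singleton]
    _ = ∫ p : Metric.sphere (0:E) 1 × Set.Ioi (0:ℝ), F (p.2.1 • (p.1:E))
        ∂(volume : Measure E).toSphere.prod (.volumeIoiPow (Module.finrank ℝ E - 1)) := by
      rw [← hmp.integral_comp (Homeomorph.measurableEmbedding _)]
      exact integral_congr_ae (Filter.Eventually.of_forall key)
    _ = ∫ r : Set.Ioi (0:ℝ), ∫ e : Metric.sphere (0:E) 1, F (r.1 • (e:E))
        ∂(volume : Measure E).toSphere ∂(.volumeIoiPow (Module.finrank ℝ E - 1)) :=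
      integral_prod_symm _ hint
    _ = _ := by
      simp only [Measure.volumeIoiPow, ENNReal.ofReal]
      rw [integral_withDensity_eq_integral_smul,
        integral_subtype_comap measurableSet_Ioi fun a ↦
          Real.toNNReal (a ^ (Module.finrank ℝ E - 1)) • ∫ e : Metric.sphere (0:E) 1, F (a • (e:E))
            ∂(volume : Measure E).toSphere,
        setIntegral_congr_fun measurableSet_Ioi fun x hx ↦ ?_]
      · simp only [NNReal.smul_def, Real.coe_toNNReal _ (pow_nonneg hx.out.le _), smul_eq_mul]
      · exact (measurable_subtype_coe.pow_const _).real_toNNReal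

lemma aux_polar {E : Type*} [NormedAddCommGroup E] [InnerProductSpace ℝ E]
    [FiniteDimensional ℝ E] [MeasurableSpace E] [BorelSpace E] [Nontrivial E]
    (k : E → ℝ) (hk : Continuous k) (R : ℝ) (hR : 0 < R) :
    ∫ u in Metric.ball (0:E) R, k u = ∫ r in (0:ℝ)..R, r ^ (Module.finrank ℝ E - 1) *
      ∫ e : Metric.sphere (0:E) 1, k (r • (e:E)) ∂(volume : Measure E).toSphere := by
  have hi : IntegrableOn k (Metric.ball (0:E) R) :=
    (hk.continuousOn.integrableOn_compact (isCompact_closedBall 0 R)).mono_set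
      Metric.ball_subset_closedBall
  rw [← integral_indicator measurableSet_ball,
    aux_polar_int _ ((integrable_indicator_iff measurableSet_ball).2 hi),
    intervalIntegral.integral_of_le hR.le, ← setIntegral_congr_set Ioo_ae_eq_Ioc,
    ← Set.Ioi_inter_Iio, ← setIntegral_indicator measurableSet_Iio]
  refine setIntegral_congr_fun measurableSet_Ioi fun r hr => ?_
  have hn : ∀ e : Metric.sphere (0:E) 1, ‖r • (e:E)‖ = r := by
    intro e; simp [norm_smul, abs_of_pos hr.out]
  by_cases h : r < R
  · simp [Set.indicator, h, hn]
  · simp [Set.indicator, h, hn]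

lemma aux_cont {E : Type*} [NormedAddCommGroup E] [InnerProductSpace ℝ E]
    [FiniteDimensional ℝ E] [MeasurableSpace E] [BorelSpace E]
    (k : E → E → ℝ) (hk : Continuous k.uncurry) :
    Continuous fun r : ℝ =>
      ∫ e : Metric.sphere (0:E) 1, k (r • (e:E)) e ∂(volume : Measure E).toSphere := by
  have := continuous_parametric_integral_of_continuous (μ := (volume : Measure E).toSphere)
    (f := fun (r : ℝ) (e : Metric.sphere (0:E) 1) => k (r • (e:E)) e)
    (by exact hk.comp (by fun_prop :
      Continuous fun p : ℝ × Metric.sphere (0:E) 1 => (p.1 • (p.2:E), (p.2:E)))) isCompact_univ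
  simpa using this

lemma aux_ibp {E : Type*} [NormedAddCommGroup E] [InnerProductSpace ℝ E]
    [FiniteDimensional ℝ E] [MeasurableSpace E] [BorelSpace E]
    (g : E → ℝ) (hg : ContDiff ℝ 1 g) (v : E) (R : ℝ) (hR : 0 < R) :
    ∫ u in Metric.ball (0:E) R, (R^2 - ‖u‖^2)^2 * fderiv ℝ g u v =
      4 * ∫ u in Metric.ball (0:E) R, (R^2 - ‖u‖^2) * (inner ℝ u v * g u) := by
  have hg' : Continuous fun u => fderiv ℝ g u v :=
    (hg.continuous_fderiv one_ne_zero).clm_apply continuous_const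
  have hgc := hg.continuous
  have hw : ∀ u : E, HasFDerivAt (fun u : E => (max 0 (R^2 - ‖u‖^2))^2)
      ((2 * max 0 (R^2 - ‖u‖^2)) • (- (2 • innerSL ℝ u) : E →L[ℝ] ℝ)) u := by
    intro u
    have h1 : HasFDerivAt (fun u : E => R^2 - ‖u‖^2) (- (2 • innerSL ℝ u) : E →L[ℝ] ℝ) u :=
      (hasStrictFDerivAt_norm_sq u).hasFDerivAt.const_sub _
    exact (aux_sq (R^2 - ‖u‖^2)).comp_hasFDerivAt u h1
  have hfd : ∀ u, fderiv ℝ (fun u : E => (max 0 (R^2 - ‖u‖^2))^2) u v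
      = -4 * (max 0 (R^2 - ‖u‖^2) * inner ℝ u v) := by
    intro u
    rw [(hw u).fderiv]
    simp
    ring
  have hz : ∀ u : E, u ∉ Metric.closedBall (0:E) R → max 0 (R^2 - ‖u‖^2) = 0 := by
    intro u hu
    simp only [Metric.mem_closedBall, dist_zero_right, not_le] at hu
    exact max_eq_left (by nlinarith)
  have hz' : ∀ u : E, u ∉ Metric.ball (0:E) R → max 0 (R^2 - ‖u‖^2) = 0 := by
    intro u hu
    simp only [Metric.mem_ball, dist_zero_right, not_lt] at hu
    exact max_eq_left (by nlinarith)
  have hz2 : ∀ u : E, u ∈ Metric.ball (0:E) R → max 0 (R^2 - ‖u‖^2) = R^2 - ‖u‖^2 := by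
    intro u hu
    simp only [Metric.mem_ball, dist_zero_right] at hu
    exact max_eq_right (by nlinarith [norm_nonneg u])
  have hI : ∀ f : E → ℝ, Continuous f → (∀ u, max 0 (R^2 - ‖u‖^2) = 0 → f u = 0) →
      Integrable f := by
    intro f hf h
    refine hf.integrable_of_hasCompactSupport
      (HasCompactSupport.intro (isCompact_closedBall (0:E) R) fun u hu => h u (hz u hu))
  have main := integral_mul_fderiv_eq_neg_fderiv_mul_of_integrable (μ := (volume : Measure E))
    (f := fun u : E => (max 0 (R^2 - ‖u‖^2))^2) (g := g) (v := v)
    (by simp only [hfd]; exact hI _ (by fun_prop) (by intro u h; simp [h]))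
    (hI _ (by fun_prop) (by intro u h; simp [h]))
    (hI _ (by fun_prop) (by intro u h; simp [h]))
    (fun u _ => (hw u).differentiableAt)
    (fun u _ => (hg.differentiable one_ne_zero) u)
  simp only [hfd] at main
  have e1 := setIntegral_eq_integral_of_forall_compl_eq_zero (μ := (volume : Measure E))
    (s := Metric.ball (0:E) R) (f := fun u => (max 0 (R^2 - ‖u‖^2))^2 * fderiv ℝ g u v)
    (by intro u hu; simp [hz' u hu])
  have e2 := setIntegral_eq_integral_of_forall_compl_eq_zero (μ := (volume : Measure E))
    (s := Metric.ball (0:E) R) (f := fun u => -4 * (max 0 (R^2 - ‖u‖^2) * inner ℝ u v) * g u)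
    (by intro u hu; simp [hz' u hu])
  rw [← e1, ← e2, ← integral_neg] at main
  rw [← integral_const_mul]
  refine Eq.trans ?_ (main.trans ?_)
  · refine setIntegral_congr_fun measurableSet_ball fun u hu => ?_
    simp only [hz2 u hu]
  · refine setIntegral_congr_fun measurableSet_ball fun u hu => ?_
    simp only [hz2 u hu]
    ring

lemma aux_stokes {E : Type*} [NormedAddCommGroup E] [InnerProductSpace ℝ E]
    [FiniteDimensional ℝ E] [MeasurableSpace E] [BorelSpace E] [Nontrivial E]
    (g : E → ℝ) (hg : ContDiff ℝ 1 g) (v : E) :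
    ∫ u in Metric.ball (0:E) 1, fderiv ℝ g u v =
      ∫ e : Metric.sphere (0:E) 1, inner ℝ (e:E) v * g e ∂(volume : Measure E).toSphere := by
  have hg' : Continuous fun u => fderiv ℝ g u v :=
    (hg.continuous_fderiv one_ne_zero).clm_apply continuous_const
  have hgc := hg.continuous
  have hA := aux_cont (fun u _ => fderiv ℝ g u v) (by
    exact hg'.comp continuous_fst)
  have hS := aux_cont (fun (u : E) _ => inner ℝ u v * g u) (by
    exact (by fun_prop : Continuous fun p : E × E => inner ℝ p.1 v * g p.1))
  have hn : ∀ (r : ℝ) (e : Metric.sphere (0:E) 1), ‖r • (e:E)‖^2 = r^2 := by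
    intro r e; simp [norm_smul]
  rw [aux_polar _ hg' 1 one_pos]
  have := aux_1d _ _ ((continuous_id.pow (Module.finrank ℝ E - 1)).mul hA)
    ((continuous_id.pow (Module.finrank ℝ E - 1)).mul hS) ?_
  · simpa using this
  · intro R hR
    have h := aux_ibp g hg v R hR
    rw [aux_polar _ (by fun_prop) R hR, aux_polar _ (by fun_prop) R hR] at h
    simp only [hn, integral_const_mul] at h
    simp only [Pi.mul_apply, Pi.pow_apply, id]
    simp only [mul_left_comm _ (_ ^ (Module.finrank ℝ E - 1))]
    exact h

/-- Spherical Stokes/divergence identity: for `e` uniform on the unit sphere and `u` uniform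
on the unit ball, `E[(d/γ) h(x + γe) e] = E[∇h(x + γu)]`. -/
theorem stmt19 (d : ℕ) (hd : 0 < d) (h : EuclideanSpace ℝ (Fin d) → ℝ)
    (hh : ContDiff ℝ 1 h) (x : EuclideanSpace ℝ (Fin d)) (γ : ℝ) (hγ : 0 < γ) :
    ∫ e, (((d : ℝ) / γ) * h (x + γ • e)) • e ∂(sphereUniform d)
      = ∫ u, gradient h (x + γ • u) ∂(ballUniform d) := by
  have : Nonempty (Fin d) := ⟨⟨0, hd⟩⟩
  have hhc := hh.continuous
  have hgr : Continuous (gradient h) :=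
    (InnerProductSpace.toDual ℝ (EuclideanSpace ℝ (Fin d))).symm.continuous.comp
      (hh.continuous_fderiv one_ne_zero)
  have hemb : MeasurableEmbedding
      ((↑) : Metric.sphere (0 : EuclideanSpace ℝ (Fin d)) 1 → EuclideanSpace ℝ (Fin d)) :=
    MeasurableEmbedding.subtype_coe Metric.isClosed_sphere.measurableSet
  rw [sphereUniform, ballUniform, integral_smul_measure, integral_smul_measure,
    hemb.integral_map, Measure.toSphere_apply_univ]
  have hV : (volume (Metric.ball (0 : EuclideanSpace ℝ (Fin d)) 1)).toReal ≠ 0 :=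
    (ENNReal.toReal_pos (Metric.measure_ball_pos _ _ one_pos).ne' measure_ball_lt_top.ne).ne'
  refine ext_inner_left ℝ fun v => ?_
  rw [inner_smul_right, inner_smul_right, ← integral_inner, ← integral_inner]
  · have hs := aux_stokes (fun u => h (x + γ • u)) (by fun_prop) v
    have hfd : ∀ u, fderiv ℝ (fun u => h (x + γ • u)) u v
        = γ * inner ℝ v (gradient h (x + γ • u)) := by
      intro u
      have h1 : HasFDerivAt (fun u : EuclideanSpace ℝ (Fin d) => x + γ • u)
        (γ • ContinuousLinearMap.id ℝ _) u := ((hasFDerivAt_id u).const_smul γ).const_add x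
      have h2 := ((hh.differentiable one_ne_zero) (x + γ • u)).hasFDerivAt.comp u h1
      have h3 := h2.fderiv
      simp only [Function.comp_def] at h3
      rw [h3, real_inner_comm, inner_gradient_left]
      simp
    simp only [hfd, integral_const_mul] at hs
    have h4 : ∀ e : Metric.sphere (0 : EuclideanSpace ℝ (Fin d)) 1,
      inner ℝ v (((d : ℝ) / γ * h (x + γ • (e : EuclideanSpace ℝ (Fin d)))) •
        (e : EuclideanSpace ℝ (Fin d))) =
      (d / γ) * (inner ℝ (e : EuclideanSpace ℝ (Fin d)) v *
        h (x + γ • (e : EuclideanSpace ℝ (Fin d)))) := by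
      intro e
      rw [inner_smul_right, real_inner_comm]; ring
    simp only [h4, integral_const_mul]
    rw [← hs]
    simp only [ENNReal.toReal_inv, ENNReal.toReal_mul, ENNReal.toReal_natCast,
      finrank_euclideanSpace, Fintype.card_fin]
    have : (d : ℝ) ≠ 0 := by positivity
    field_simp
  · exact ((by fun_prop : Continuous fun u => gradient h (x + γ • u)).continuousOn.integrableOn_compact
      (isCompact_closedBall 0 1)).mono_set Metric.ball_subset_closedBall
  · exact Continuous.integrable_of_hasCompactSupport (by fun_prop) (HasCompactSupport.of_compactSpace _)
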